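/- arXiv:2111.14687 — 2 statements merged into one kernel-verified Lean document; each statement's English description precedes it below -/
import Mathlib

section
/- Let p, q, α be real numbers with e^{iα} ≠ −1, e^{ip} ≠ e^{iq}, e^{i(q−p)} ≠ −1, sin(q−p) ≠ 0, sin(q/2) ≠ 0 and cos(q/2 − p) ≠ 0. Then 4e^{iα}/(1+e^{iα})² = (1−e^{iq})(e^{ip}+e^{i(q−p)}) / ((e^{ip}−e^{iq})(1+e^{i(q−p)})) holds if and only if cos²(α/2) = sin(q−p)/(2·sin(q/2)·cos(q/2−p)). -/
theorem exp_I_mul_add_exp_I_mul (a b : ℂ) :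
    Complex.exp (Complex.I * a) + Complex.exp (Complex.I * b)
      = 2 * Complex.cos ((a - b) / 2) * Complex.exp (Complex.I * ((a + b) / 2)) := by
  rw [Complex.two_cos, add_mul, ← Complex.exp_add, ← Complex.exp_add]
  congr 2 <;> ring

theorem exp_I_mul_sub_exp_I_mul (a b : ℂ) :
    Complex.exp (Complex.I * a) - Complex.exp (Complex.I * b)
      = 2 * Complex.I * Complex.sin ((a - b) / 2) * Complex.exp (Complex.I * ((a + b) / 2)) := by
  have h : 2 * Complex.I * Complex.sin ((a - b) / 2)
      = Complex.exp ((a - b) / 2 * Complex.I) - Complex.exp (-((a - b) / 2) * Complex.I) := by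
    rw [mul_right_comm, Complex.two_sin, mul_assoc, Complex.I_mul_I]
    ring
  rw [h, sub_mul, ← Complex.exp_add, ← Complex.exp_add]
  congr 2 <;> ring

/-- No hypothesis on `α` is needed: both sides are `0` when `e^{iα} = -1`. -/
theorem four_mul_exp_div_one_add_exp_sq (α : ℂ) :
    4 * Complex.exp (Complex.I * α) / (1 + Complex.exp (Complex.I * α)) ^ 2
      = (Complex.cos (α / 2) ^ 2)⁻¹ := by
  have hsum : 1 + Complex.exp (Complex.I * α)
      = 2 * Complex.cos (α / 2) * Complex.exp (Complex.I * (α / 2)) := by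
    simpa [add_comm] using exp_I_mul_add_exp_I_mul α 0
  have hsq : Complex.exp (Complex.I * α) = Complex.exp (Complex.I * (α / 2)) ^ 2 := by
    rw [← Complex.exp_nat_mul]
    congr 1
    push_cast
    ring
  have hne := Complex.exp_ne_zero (Complex.I * (α / 2))
  rw [hsum, hsq]
  field_simp
  norm_num

theorem crossratio_eq_sin_mul_cos_div_sin (p q : ℂ) :
    (1 - Complex.exp (Complex.I * q))
        * (Complex.exp (Complex.I * p) + Complex.exp (Complex.I * (q - p)))
      / ((Complex.exp (Complex.I * p) - Complex.exp (Complex.I * q))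
        * (1 + Complex.exp (Complex.I * (q - p))))
      = 2 * Complex.sin (q / 2) * Complex.cos (q / 2 - p) / Complex.sin (q - p) := by
  have hq : 1 - Complex.exp (Complex.I * q)
      = -(2 * Complex.I * Complex.sin (q / 2) * Complex.exp (Complex.I * (q / 2))) := by
    have h := exp_I_mul_sub_exp_I_mul q 0
    simp only [mul_zero, Complex.exp_zero, sub_zero, add_zero] at h
    rw [← h, neg_sub]
  have hpq : Complex.exp (Complex.I * p) + Complex.exp (Complex.I * (q - p))
      = 2 * Complex.cos (q / 2 - p) * Complex.exp (Complex.I * (q / 2)) := by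
    rw [add_comm, exp_I_mul_add_exp_I_mul]
    congr 3 <;> ring
  have hsub : Complex.exp (Complex.I * p) - Complex.exp (Complex.I * q)
      = -(2 * Complex.I * Complex.sin ((q - p) / 2) * Complex.exp (Complex.I * ((q + p) / 2))) := by
    rw [← exp_I_mul_sub_exp_I_mul, neg_sub]
  have hadd : 1 + Complex.exp (Complex.I * (q - p))
      = 2 * Complex.cos ((q - p) / 2) * Complex.exp (Complex.I * ((q - p) / 2)) := by
    simpa [add_comm] using exp_I_mul_add_exp_I_mul (q - p) 0
  have hsin : Complex.sin (q - p)
      = 2 * Complex.sin ((q - p) / 2) * Complex.cos ((q - p) / 2) := by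
    rw [← Complex.sin_two_mul, mul_div_cancel₀ _ two_ne_zero]
  have hexp : Complex.exp (Complex.I * ((q + p) / 2)) * Complex.exp (Complex.I * ((q - p) / 2))
      = Complex.exp (Complex.I * (q / 2)) * Complex.exp (Complex.I * (q / 2)) := by
    rw [← Complex.exp_add, ← Complex.exp_add]
    congr 1
    ring
  have hc : -2 * Complex.I
      * (Complex.exp (Complex.I * (q / 2)) * Complex.exp (Complex.I * (q / 2))) ≠ 0 := by
    simp [Complex.exp_ne_zero]
  rw [hq, hpq, hsub, hadd, hsin,
    ← mul_div_mul_left (2 * Complex.sin (q / 2) * Complex.cos (q / 2 - p)) _ hc]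
  congr 1
  · ring
  · rw [← hexp]
    ring

/-- The cross-ratio condition determining the parameter `α` of the Möbius transformation
sending `1, e^{iα}, -1, -e^{iα}` to `1, e^{ip}, e^{iq}, -e^{i(q-p)}` is equivalent to
`cos²(α/2) = sin(q-p)/(2 sin(q/2) cos(q/2-p))`. -/
theorem crossratio_condition_iff (p q α : ℝ)
    (h1 : Complex.exp (Complex.I * α) ≠ -1)
    (h2 : Complex.exp (Complex.I * p) ≠ Complex.exp (Complex.I * q))
    (h3 : Complex.exp (Complex.I * (q - p)) ≠ -1)
    (h4 : Real.sin (q - p) ≠ 0) (h5 : Real.sin (q / 2) ≠ 0) (h6 : Real.cos (q / 2 - p) ≠ 0) :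
    4 * Complex.exp (Complex.I * α) / (1 + Complex.exp (Complex.I * α)) ^ 2
        = (1 - Complex.exp (Complex.I * q))
            * (Complex.exp (Complex.I * p) + Complex.exp (Complex.I * (q - p)))
          / ((Complex.exp (Complex.I * p) - Complex.exp (Complex.I * q))
            * (1 + Complex.exp (Complex.I * (q - p))))
    ↔ Real.cos (α / 2) ^ 2 = Real.sin (q - p) / (2 * Real.sin (q / 2) * Real.cos (q / 2 - p)) := by
  rw [four_mul_exp_div_one_add_exp_sq, crossratio_eq_sin_mul_cos_div_sin,
    ← inv_div (Complex.sin _), inv_inj]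
  norm_cast
end

section
/- Let p, q be real with sin p > 0, sin(q−p) > 0, sin(q/2) ≠ 0, cos q ≠ 1 and sin p·sin(q−p) < 1. Define a = (cos(q−p) − cos p − i·sin q) / (1 − cos q + 2√(sin p·sin(q−p)) + i·(sin(q−p) − sin p)). Then a = √((1 − √(sin p·sin(q−p)))/(1 + √(sin p·sin(q−p)))) · (cos δ + i·sin δ), where cos δ = −sin(q/2 − p)/(sin(q/2)·√(1 − sin(q−p)·sin p)) and sin δ = −cos(q/2)·√(sin(q−p)·sin p)/(sin(q/2)·√(1 − sin(q−p)·sin p)). -/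
/-- Polar decomposition of the complex parameter `a`: if `cos δ` and `sin δ` take the
displayed values, then `a = √((1-√(sin p sin(q-p)))/(1+√(sin p sin(q-p)))) (cos δ + i sin δ)`. -/
theorem a_polar_decomposition (p q δ : ℝ)
    (hsinp : 0 < Real.sin p) (hsinqp : 0 < Real.sin (q - p))
    (hsinq2 : Real.sin (q / 2) ≠ 0) (hq : Real.cos q ≠ 1)
    (hlt : Real.sin p * Real.sin (q - p) < 1)
    (a : ℂ)
    (ha : a = (((Real.cos (q - p) - Real.cos p : ℝ) : ℂ) - Complex.I * (Real.sin q : ℂ)) /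
      (((1 - Real.cos q + 2 * Real.sqrt (Real.sin p * Real.sin (q - p)) : ℝ) : ℂ)
        + Complex.I * ((Real.sin (q - p) - Real.sin p : ℝ) : ℂ)))
    (hcosδ : Real.cos δ = -Real.sin (q / 2 - p)
      / (Real.sin (q / 2) * Real.sqrt (1 - Real.sin (q - p) * Real.sin p)))
    (hsinδ : Real.sin δ = -Real.cos (q / 2) * Real.sqrt (Real.sin (q - p) * Real.sin p)
      / (Real.sin (q / 2) * Real.sqrt (1 - Real.sin (q - p) * Real.sin p))) :
    a = ((Real.sqrt ((1 - Real.sqrt (Real.sin p * Real.sin (q - p)))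
          / (1 + Real.sqrt (Real.sin p * Real.sin (q - p)))) : ℝ) : ℂ)
        * ((Real.cos δ : ℂ) + Complex.I * (Real.sin δ : ℂ)) := by
  obtain ⟨h, r, rfl, rfl⟩ : ∃ h r : ℝ, q = 2 * h ∧ p = h - r :=
    ⟨q / 2, q / 2 - p, by ring, by ring⟩
  have e₁ : 2 * h / 2 = h := by ring
  have e₂ : 2 * h - (h - r) = h + r := by ring
  have e₃ : h - (h - r) = r := by ring
  simp only [e₁, e₂, e₃] at *
  rw [mul_comm (Real.sin (h + r))] at hcosδ hsinδ
  have hpos : 0 < Real.sin (h - r) * Real.sin (h + r) := mul_pos hsinp hsinqp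
  obtain ⟨s, hs⟩ : ∃ s, s = √(Real.sin (h - r) * Real.sin (h + r)) := ⟨_, rfl⟩
  have hs0 : 0 < s := hs ▸ Real.sqrt_pos.2 hpos
  have hsq : s ^ 2 = Real.sin (h - r) * Real.sin (h + r) := by
    rw [hs, Real.sq_sqrt hpos.le]
  rw [← hs] at ha hsinδ ⊢
  rw [← hsq] at hcosδ hsinδ hlt
  have hs1 : s < 1 := by nlinarith
  have hroot : √((1 - s) / (1 + s)) = √(1 - s ^ 2) / (1 + s) := by
    rw [show (1 - s) / (1 + s) = (1 - s ^ 2) / (1 + s) ^ 2 by field_simp; ring,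
      Real.sqrt_div (by linarith), Real.sqrt_sq (by linarith)]
  have hw : 0 < √(1 - s ^ 2) := Real.sqrt_pos.2 (by linarith)
  have hcs := Real.sin_sq_add_cos_sq h
  have hrr := Real.sin_sq_add_cos_sq r
  have hs2 : s ^ 2 = Real.sin h ^ 2 - Real.sin r ^ 2 := by
    rw [hsq, Real.sin_sub, Real.sin_add]
    linear_combination Real.sin h ^ 2 * hrr - Real.sin r ^ 2 * hcs
  have hden : ((1 - Real.cos (2 * h) + 2 * s : ℝ) : ℂ)
      + Complex.I * ((Real.sin (h + r) - Real.sin (h - r) : ℝ) : ℂ) ≠ 0 := by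
    intro hz
    have hre := congrArg Complex.re hz
    simp only [Complex.add_re, Complex.ofReal_re, Complex.re_mul_ofReal, Complex.I_re,
      zero_mul, add_zero, Complex.zero_re] at hre
    linarith [Real.cos_le_one (2 * h)]
  have hcosmul : √((1 - s) / (1 + s)) * Real.cos δ
      = -Real.sin r / (Real.sin h * (1 + s)) := by
    rw [hroot, hcosδ]
    field_simp
  have hsinmul : √((1 - s) / (1 + s)) * Real.sin δ
      = -(Real.cos h * s) / (Real.sin h * (1 + s)) := by
    rw [hroot, hsinδ]
    field_simp
  rw [ha, mul_add, mul_left_comm, ← Complex.ofReal_mul, ← Complex.ofReal_mul, hcosmul,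
    hsinmul, div_eq_iff hden]
  have h1s : 1 + s ≠ 0 := by positivity
  rw [Real.cos_add, Real.cos_sub, Real.sin_add, Real.sin_sub, Real.sin_two_mul,
    Real.cos_two_mul]
  apply Complex.ext
  · simp only [Complex.add_re, Complex.sub_re, Complex.mul_re, Complex.add_im, Complex.mul_im,
      Complex.ofReal_re, Complex.ofReal_im, Complex.I_re, Complex.I_im]
    field_simp
    linear_combination -2 * Real.sin r * (1 + s) * hcs
  · simp only [Complex.add_re, Complex.sub_im, Complex.mul_re, Complex.add_im, Complex.mul_im,
      Complex.ofReal_re, Complex.ofReal_im, Complex.I_re, Complex.I_im]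
    field_simp
    linear_combination -2 * s * Real.cos h * hcs + 2 * Real.cos h * hs2
end
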